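/- arXiv:1502.03065 — 2 statements merged into one kernel-verified Lean document; each statement's English description precedes it below -/
import Mathlib

section
/- Let A be a finite alphabet. In the incidence algebra I(A*) over ℚ, define P(u,v) = binom(v,u) and H(u,v) = binom(v,u) if |v| = |u|+1, else 0. Then P = e^H entrywise; that is, for all words u ≤ v, ∑_{ℓ=0}^{|v|−|u|} (1/ℓ!) · H^ℓ(u,v) = binom(v,u), where H^0 = δ is the identity of the incidence algebra. (All higher powers H^ℓ(u,v) with ℓ > |v|−|u| vanish, so the exponential is a finite sum on each interval.) -/
/-- `subwordCount v u` is the number of occurrences of `u` as a (scattered) subword of `v`,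
i.e. the number of strictly increasing maps `φ` from the positions of `u` to the positions of
`v` matching the letters. -/
def subwordCount {A : Type*} [DecidableEq A] (v u : List A) : ℕ :=
  ((Finset.univ : Finset (Fin u.length → Fin v.length)).filter
    (fun φ => (∀ i j : Fin u.length, i < j → φ i < φ j) ∧
      ∀ i : Fin u.length, u.get i = v.get (φ i))).card

/-- The identity `δ` of the incidence algebra `I(A*)` over `ℚ`. -/
def deltaW {A : Type*} [DecidableEq A] (u v : List A) : ℚ := if u = v then 1 else 0

/-- Convolution in the incidence algebra `I(A*)` of words under the subword order:
`(FG)(u,v) = ∑_{u ≤ z ≤ v} F(u,z)·G(z,v)`.  The words `z` with `u ≤ z ≤ v` are exactly the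
sublists `z` of `v` with `subwordCount z u > 0`. -/
def convW {A : Type*} [DecidableEq A] (F G : List A → List A → ℚ) (u v : List A) : ℚ :=
  ∑ z ∈ v.sublists.toFinset.filter (fun z => 0 < subwordCount z u), F u z * G z v

/-- Convolution powers, with `F ^ 0 = δ`. -/
def convPowW {A : Type*} [DecidableEq A] (F : List A → List A → ℚ) :
    ℕ → List A → List A → ℚ
  | 0 => deltaW
  | ℓ + 1 => convW F (convPowW F ℓ)

/-- The element `H` of `I(A*)`: `H(u,v) = binom(v,u)` if `|v| = |u| + 1`, else `0`. -/
def HW {A : Type*} [DecidableEq A] (u v : List A) : ℚ :=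
  if v.length = u.length + 1 then (subwordCount v u : ℚ) else 0

/-!
Let `P_k` be the component of `P` in degree `|v| - |u| = k`, so that `P_0 = δ`, `P_1 = H` and
`P = ∑ P_k`. To refine an occurrence of `u` in `v` through an intermediate word with `|u| + j`
letters is to choose which `j` of the `|v| - |u|` unused positions of `v` to keep; hence
`P_j P_k = choose (j + k) j • P_{j + k}`, so that `H ^ k = k! • P_k`.
-/

section Occurrences

open List

variable {α β A : Type*} [DecidableEq A]

theorem sublistsLen_map (f : α → β) (n : ℕ) (l : List α) :
    sublistsLen n (l.map f) = (sublistsLen n l).map (List.map f) := by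
  induction l generalizing n with
  | nil => cases n <;> simp
  | cons a l ih => cases n <;> simp [sublistsLen_succ_cons, ih]

theorem sublist_finRange_iff_sortedLT {n : ℕ} {l : List (Fin n)} :
    l <+ finRange n ↔ l.SortedLT := by
  refine ⟨fun h => ((sortedLT_finRange n).pairwise.sublist h).sortedLT, fun h => ?_⟩
  exact sublist_of_subperm_of_sortedLE (h.nodup.subperm fun i _ => mem_finRange i)
    h.sortedLE (sortedLT_finRange n).sortedLE

theorem count_cons_map_cons (a b : A) (u : List A) (L : List (List A)) :
    (L.map (cons b)).count (a :: u) = if a = b then L.count u else 0 := by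
  split_ifs with h
  · rw [h, count_map_of_injective _ _ cons_injective]
  · simp [count_eq_zero, Ne.symm h]

-- An occurrence `φ` is encoded as the increasing list of positions `φ 0, φ 1, …`, and these lists
-- are the sublists of `finRange v.length`.
theorem subwordCount_eq_count_sublistsLen (v u : List A) :
    subwordCount v u = (v.sublistsLen u.length).count u := by
  let positions : Finset (List (Fin v.length)) :=
    ⟨sublistsLen u.length (finRange v.length), nodup_sublistsLen _ (nodup_finRange _)⟩
  have count_eq_card : (v.sublistsLen u.length).count u =
      (positions.filter fun s => s.map v.get = u).card := by
    conv_lhs => rw [← map_get_finRange v, sublistsLen_map]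
    rw [count, countP_map, countP_eq_length_filter]
    simp only [Finset.card_def, Finset.filter_val, positions, Multiset.filter_coe,
      Multiset.coe_card, Function.comp_def, Bool.beq_eq_decide_eq]
  have mem_positions (s : List (Fin v.length)) :
      s ∈ positions ↔ s.SortedLT ∧ s.length = u.length := by
    rw [← sublist_finRange_iff_sortedLT]
    exact mem_sublistsLen
  rw [count_eq_card, subwordCount]
  refine Finset.card_bij (fun φ _ => ofFn φ) (fun φ hφ => ?_)
    (fun φ _ ψ _ h => ofFn_injective h) (fun s hs => ?_)
  · obtain ⟨-, φ_mono, φ_letters⟩ := Finset.mem_filter.1 hφ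
    refine Finset.mem_filter.2 ⟨(mem_positions _).2 ⟨?_, length_ofFn⟩, ?_⟩
    · exact sortedLT_ofFn_iff.2 fun i j => φ_mono i j
    · rw [map_ofFn, ← show u.get = v.get ∘ φ from funext φ_letters, ofFn_get]
  · obtain ⟨s_positions, rfl⟩ := Finset.mem_filter.1 hs
    have s_mono := ((mem_positions s).1 s_positions).1.strictMono_get
    refine ⟨s.get ∘ Fin.cast (length_map v.get),
      Finset.mem_filter.2 ⟨Finset.mem_univ _, ?_, ?_⟩, ?_⟩
    · exact fun i j hij => s_mono hij
    · exact fun i => by simp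
    · exact ext_get (by simp) (by simp)

theorem subwordCount_nil (v : List A) : subwordCount v [] = 1 := by
  simp [subwordCount_eq_count_sublistsLen]

theorem subwordCount_nil_cons (a : A) (u : List A) : subwordCount [] (a :: u) = 0 := by
  simp [subwordCount_eq_count_sublistsLen]

theorem subwordCount_cons_cons (a b : A) (u v : List A) :
    subwordCount (b :: v) (a :: u) =
      subwordCount v (a :: u) + if a = b then subwordCount v u else 0 := by
  simp only [subwordCount_eq_count_sublistsLen, length_cons, sublistsLen_succ_cons, count_append,
    count_cons_map_cons]

theorem subwordCount_eq_zero_of_length_lt {u v : List A} (h : v.length < u.length) :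
    subwordCount v u = 0 := by
  rw [subwordCount_eq_count_sublistsLen, sublistsLen_of_length_lt h, count_nil]

theorem subwordCount_of_length_eq {u v : List A} (h : v.length = u.length) :
    subwordCount v u = if u = v then 1 else 0 := by
  rw [subwordCount_eq_count_sublistsLen, ← h, sublistsLen_length, count_singleton]
  simp only [beq_iff_eq, eq_comm (a := u)]

-- Split the intermediate words in `b :: v` according to whether they use the first letter `b`, and
-- then their occurrences of `a :: u` according to whether those use `b` as well.
theorem sum_sublistsLen_cons_subwordCount_cons (a b : A) (u v : List A) (m : ℕ) :
    (((b :: v).sublistsLen (m + 1)).map (subwordCount · (a :: u))).sum =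
      ((v.sublistsLen (m + 1)).map (subwordCount · (a :: u))).sum +
      ((v.sublistsLen m).map (subwordCount · (a :: u))).sum +
      if a = b then ((v.sublistsLen m).map (subwordCount · u)).sum else 0 := by
  split_ifs with hab <;>
    simp [sublistsLen_succ_cons, Function.comp_def, subwordCount_cons_cons, hab, sum_map_add,
      add_assoc]

theorem sum_sublistsLen_subwordCount (u v : List A) (k : ℕ) :
    ((v.sublistsLen (u.length + k)).map (subwordCount · u)).sum =
      (v.length - u.length).choose k * subwordCount v u := by
  induction v generalizing u k with
  | nil =>
    cases u with
    | nil => cases k <;> simp [subwordCount_nil]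
    | cons a u => simp [subwordCount_nil_cons, add_right_comm _ 1 k]
  | cons b v ih =>
    cases u with
    | nil => simp [subwordCount_nil]
    | cons a u =>
      have pascal :
          ((v.sublistsLen (u.length + 1 + k)).map (subwordCount · (a :: u))).sum +
            ((v.sublistsLen (u.length + k)).map (subwordCount · (a :: u))).sum =
          (v.length - u.length).choose k * subwordCount v (a :: u) := by
        rw [← length_cons (a := a), ih]
        cases k with
        | zero =>
          have no_occurrence (z : List A) (hz : z ∈ v.sublistsLen u.length) :
              subwordCount z (a :: u) = 0 :=
            subwordCount_eq_zero_of_length_lt (by simp [length_of_sublistsLen hz])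
          simp [map_congr_left no_occurrence]
        | succ k =>
          rw [← add_assoc, add_right_comm, ← length_cons (a := a), ih]
          rcases lt_or_ge v.length (a :: u).length with hlt | hle
          · simp [subwordCount_eq_zero_of_length_lt hlt]
          · rw [← Nat.add_mul, show v.length - u.length = v.length - (a :: u).length + 1 by
              grind, Nat.choose_succ_succ, add_comm (Nat.choose _ k)]
      rw [length_cons, add_right_comm, sum_sublistsLen_cons_subwordCount_cons,
        add_right_comm _ k, pascal, ih, subwordCount_cons_cons, length_cons,
        Nat.add_sub_add_right, Nat.mul_add, mul_ite, mul_zero]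

theorem sum_subwordCount_mul_subwordCount (u v : List A) (k : ℕ) :
    ∑ z ∈ (v.sublistsLen (u.length + k)).toFinset, subwordCount z u * subwordCount v z =
      (v.length - u.length).choose k * subwordCount v u := by
  rw [← sum_sublistsLen_subwordCount, Finset.sum_list_map_count]
  refine Finset.sum_congr rfl fun z hz => ?_
  rw [subwordCount_eq_count_sublistsLen v z, length_of_sublistsLen (mem_toFinset.1 hz),
    smul_eq_mul, mul_comm]
  congr!

end Occurrences

section IncidenceAlgebra

open List

variable {A : Type*} [DecidableEq A]

/-- The homogeneous component of degree `k` of `P(u,v) = binom(v,u)` in `I(A*)`, extended by zero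
to all pairs of words. -/
def subwordComponent (k : ℕ) (u v : List A) : ℚ :=
  if v.length = u.length + k then subwordCount v u else 0

theorem subwordComponent_zero : subwordComponent 0 = deltaW (A := A) := by
  funext u v
  by_cases h : v.length = u.length
  · simp [subwordComponent, deltaW, h, subwordCount_of_length_eq h]
  · simp [subwordComponent, deltaW, h, show u ≠ v by grind]

theorem subwordComponent_one : subwordComponent 1 = HW (A := A) := rfl

theorem convW_smul_right (F G : List A → List A → ℚ) (c : ℚ) :
    convW F (c • G) = c • convW F G := by
  funext u v
  simp [convW, Finset.mul_sum, mul_left_comm]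

theorem convW_subwordComponent_left (j : ℕ) (G : List A → List A → ℚ) (u v : List A) :
    convW (subwordComponent j) G u v =
      ∑ z ∈ (v.sublistsLen (u.length + j)).toFinset, subwordCount z u * G z v := by
  have sublistsLen_eq_filter : (v.sublistsLen (u.length + j)).toFinset =
      v.sublists.toFinset.filter (·.length = u.length + j) := by
    ext z; simp
  rw [convW, Finset.sum_filter_of_ne, sublistsLen_eq_filter, Finset.sum_filter]
  · simp only [subwordComponent, ite_mul, zero_mul]
  · intro z _ hz
    refine Nat.pos_of_ne_zero fun h => hz ?_
    simp [subwordComponent, h]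

theorem convW_subwordComponent (j k : ℕ) :
    convW (subwordComponent j) (subwordComponent k) =
      ((j + k).choose j : ℚ) • subwordComponent (A := A) (j + k) := by
  funext u v
  rw [convW_subwordComponent_left, Pi.smul_apply, Pi.smul_apply, smul_eq_mul]
  have length_eq {z : List A} (hz : z ∈ (v.sublistsLen (u.length + j)).toFinset) :
      z.length = u.length + j := length_of_sublistsLen (mem_toFinset.1 hz)
  by_cases hv : v.length = u.length + (j + k)
  · calc ∑ z ∈ (v.sublistsLen (u.length + j)).toFinset, subwordCount z u * subwordComponent k z v
      _ = ∑ z ∈ (v.sublistsLen (u.length + j)).toFinset,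
            (subwordCount z u * subwordCount v z : ℚ) :=
          Finset.sum_congr rfl fun z hz => by
            rw [subwordComponent, if_pos (by rw [hv, length_eq hz, add_assoc])]
      _ = (v.length - u.length).choose j * subwordCount v u := by
          exact_mod_cast sum_subwordCount_mul_subwordCount u v j
      _ = (j + k).choose j * subwordComponent (j + k) u v := by
          rw [subwordComponent, if_pos hv, hv, Nat.add_sub_cancel_left]
  · rw [subwordComponent, if_neg hv, mul_zero]
    refine Finset.sum_eq_zero fun z hz => ?_
    rw [subwordComponent, if_neg (by rwa [length_eq hz, add_assoc]), mul_zero]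

theorem convPowW_HW (k : ℕ) :
    convPowW HW k = (k.factorial : ℚ) • subwordComponent (A := A) k := by
  induction k with
  | zero => rw [convPowW, ← subwordComponent_zero, Nat.factorial_zero, Nat.cast_one, one_smul]
  | succ k ih =>
    rw [convPowW, ih, convW_smul_right, ← subwordComponent_one, convW_subwordComponent, smul_smul,
      add_comm 1 k, Nat.choose_one_right, Nat.factorial_succ, mul_comm, Nat.cast_mul]

theorem sum_range_subwordComponent {u v : List A} {n : ℕ} (hn : v.length < u.length + n) :
    ∑ k ∈ Finset.range n, subwordComponent k u v = subwordCount v u := by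
  rcases lt_or_ge v.length u.length with hlt | hle
  · simp [subwordComponent, subwordCount_eq_zero_of_length_lt hlt]
  · obtain ⟨d, hd⟩ := Nat.exists_eq_add_of_le hle
    have d_lt : d < n := by lia
    simp [subwordComponent, hd, d_lt]

theorem P_eq_exp_HW_general {u v : List A} {n : ℕ} (hn : v.length < u.length + n) :
    ∑ ℓ ∈ Finset.range n, (1 / (Nat.factorial ℓ : ℚ)) * convPowW HW ℓ u v = subwordCount v u := by
  rw [← sum_range_subwordComponent hn]
  refine Finset.sum_congr rfl fun ℓ _ => ?_
  rw [convPowW_HW, Pi.smul_apply, Pi.smul_apply, smul_eq_mul, ← mul_assoc,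
    one_div_mul_cancel (Nat.cast_ne_zero.2 ℓ.factorial_ne_zero), one_mul]

end IncidenceAlgebra

/-- Theorem (`P = e^H` in `I(A*)`): for all words `u ≤ v`,
`∑_{ℓ=0}^{|v|−|u|} (1/ℓ!) · H^ℓ(u,v) = binom(v,u)`. -/
theorem P_eq_exp_HW {A : Type*} [Fintype A] [DecidableEq A] (u v : List A)
    (h : 0 < subwordCount v u) :
    ∑ ℓ ∈ Finset.range (v.length - u.length + 1),
        (1 / (Nat.factorial ℓ : ℚ)) * convPowW HW ℓ u v = subwordCount v u :=
  P_eq_exp_HW_general (by lia)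
end

section
/- Let S denote the set of all (finite) permutations, partially ordered by pattern containment, and let H be the element of the incidence algebra I(S) over ℚ defined by H(σ,π) = binom(π,σ) if |π| = |σ|+1, else 0. Then for all permutations σ ≤ π and every natural number ℓ, H^ℓ(σ,π) = ℓ! · binom(π,σ) if |π| = |σ| + ℓ, and H^ℓ(σ,π) = 0 otherwise. -/
/-- `patternCount π σ` is the number of occurrences of the pattern `σ` in the permutation `π`:
strictly increasing maps `φ` such that `π ∘ φ` is order-isomorphic to `σ`.  A permutation of
`{1,…,n}` is modelled as an element of `Σ n, Equiv.Perm (Fin n)`. -/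
def patternCount (π σ : Σ n, Equiv.Perm (Fin n)) : ℕ :=
  ((Finset.univ : Finset (Fin σ.1 → Fin π.1)).filter
    (fun φ => (∀ i j : Fin σ.1, i < j → φ i < φ j) ∧
      ∀ i j : Fin σ.1, σ.2 i < σ.2 j ↔ π.2 (φ i) < π.2 (φ j))).card

/-- The identity `δ` of the incidence algebra `I(S)` over `ℚ`. -/
def deltaP (σ π : Σ n, Equiv.Perm (Fin n)) : ℚ := if σ = π then 1 else 0

/-- Convolution in the incidence algebra `I(S)` of permutations under pattern containment:
`(FG)(σ,π) = ∑_{σ ≤ τ ≤ π} F(σ,τ)·G(τ,π)`.  The permutations `τ` with `σ ≤ τ ≤ π` are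
exactly the `τ` of size at most `|π|` with `patternCount τ σ > 0` and `patternCount π τ > 0`. -/
def convP (F G : (Σ n, Equiv.Perm (Fin n)) → (Σ n, Equiv.Perm (Fin n)) → ℚ)
    (σ π : Σ n, Equiv.Perm (Fin n)) : ℚ :=
  ∑ τ ∈ ((Finset.range (π.1 + 1)).sigma fun m =>
      (Finset.univ : Finset (Equiv.Perm (Fin m)))).filter
        (fun τ => 0 < patternCount τ σ ∧ 0 < patternCount π τ),
    F σ τ * G τ π

/-- Convolution powers, with `F ^ 0 = δ`. -/
def convPowP (F : (Σ n, Equiv.Perm (Fin n)) → (Σ n, Equiv.Perm (Fin n)) → ℚ) :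
    ℕ → (Σ n, Equiv.Perm (Fin n)) → (Σ n, Equiv.Perm (Fin n)) → ℚ
  | 0 => deltaP
  | ℓ + 1 => convP F (convPowP F ℓ)

/-- The element `H` of `I(S)`: `H(σ,π) = binom(π,σ)` if `|π| = |σ| + 1`, else `0`. -/
def HP (σ π : Σ n, Equiv.Perm (Fin n)) : ℚ :=
  if π.1 = σ.1 + 1 then (patternCount π σ : ℚ) else 0

/-- The element `P` of `I(S)`: `P(σ,π) = binom(π,σ)`. -/
def PP (σ π : Σ n, Equiv.Perm (Fin n)) : ℚ := patternCount π σ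

/-!
Let `P_a(σ, π) = binom(π, σ)` if `|π| = |σ| + a`, and `0` otherwise, so that `δ = P_0` and
`H = P_1`. These elements satisfy the divided power relation `P_a P_b = binom(a + b, a) P_{a+b}`,
whence `H ^ ℓ = ℓ! P_ℓ`.

For the relation, let `σ`, `π` have sizes `k`, `n`, and put `m = k + a`. Every `m`-element set of
positions of `π` carries the occurrence of exactly one permutation `τ` of size `m`, and the
occurrences of `σ` in this `τ` are the occurrences of `σ` in `π` whose positions lie in the set.
Since each occurrence of `σ` in `π` lies in `binom(n - k, m - k)` such sets, double counting gives
`∑_τ binom(τ, σ) binom(π, τ) = binom(n - k, m - k) binom(π, σ)`.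
-/

open scoped Finset

section OrderEmbedding

variable {m : ℕ} {α β γ : Type*}

instance [LinearOrder α] [Fintype α] : Fintype (Fin m ↪o α) :=
  .ofEquiv _ Set.powersetCard.ofFinEmbEquiv.symm

instance : Unique (Fin m ↪o Fin m) where
  default := RelEmbedding.refl _
  uniq φ := by
    refine DFunLike.coe_injective ((StrictMono.range_inj φ.strictMono strictMono_id).1 ?_)
    rw [(Finite.surjective_of_injective φ.injective).range_eq, Set.range_id]

open scoped Classical in
theorem card_orderEmbedding_subset_range [LinearOrder α] [Fintype α] {s : Finset α}
    (hs : #s ≤ m) :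
    #{χ : Fin m ↪o α | (s : Set α) ⊆ Set.range χ} =
      (Fintype.card α - #s).choose (m - #s) := by
  rw [← Finset.card_univ,
    ← Finset.card_filter_powersetCard_subset s Finset.univ m s.subset_univ hs]
  refine Finset.card_bij (fun χ _ ↦ Finset.univ.map χ.toEmbedding) ?_ ?_ ?_
  · intro χ hχ
    refine Finset.mem_filter.2 ⟨by simp, Finset.coe_subset.1 ?_⟩
    simpa using (Finset.mem_filter.1 hχ).2
  · intro χ _ χ' _ h
    refine DFunLike.coe_injective ((StrictMono.range_inj χ.strictMono χ'.strictMono).1 ?_)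
    simpa using congrArg ((↑) : Finset α → Set α) h
  · intro T hT
    obtain ⟨hTm, hsT⟩ : #T = m ∧ s ⊆ T := by simpa using hT
    refine ⟨T.orderEmbOfFin hTm, by simpa using hsT, ?_⟩
    simp

theorem exists_trans_eq_iff_range_subset [Preorder α] [Preorder β] [Preorder γ] {χ : β ↪o γ}
    {φ : α ↪o γ} : (∃ ψ : α ↪o β, ψ.trans χ = φ) ↔ Set.range φ ⊆ Set.range χ := by
  refine ⟨?_, fun h ↦ ?_⟩
  · rintro ⟨ψ, rfl⟩
    exact Set.range_comp_subset_range ψ χ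
  · choose ψ hψ using fun i ↦ h (Set.mem_range_self i)
    refine ⟨⟨⟨ψ, fun i j hij ↦ φ.injective ?_⟩, fun {i j} ↦ ?_⟩, DFunLike.ext _ _ hψ⟩
    · rw [← hψ, ← hψ, hij]
    · change ψ i ≤ ψ j ↔ i ≤ j
      rw [← χ.le_iff_le, hψ, hψ, φ.le_iff_le]

end OrderEmbedding

section Standardization

variable {n : ℕ} {α : Type*} [LinearOrder α] {f : Fin n → α}

/-- The standardization of a tuple `f` of distinct elements of a linear order: the permutation
whose entries are in the same relative order as those of `f`. It is the inverse of the permutation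
that sorts `f`. -/
def standardization (f : Fin n → α) : Equiv.Perm (Fin n) := (Tuple.sort f)⁻¹

theorem standardization_lt_iff (hf : Function.Injective f) {i j : Fin n} :
    standardization f i < standardization f j ↔ f i < f j := by
  have hmono : StrictMono (f ∘ Tuple.sort f) :=
    (Tuple.monotone_sort f).strictMono_of_injective (hf.comp (Tuple.sort f).injective)
  rw [← hmono.lt_iff_lt]
  simp [standardization]

theorem eq_standardization_iff (hf : Function.Injective f) {σ : Equiv.Perm (Fin n)} :
    σ = standardization f ↔ ∀ i j, σ i < σ j ↔ f i < f j := by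
  refine ⟨?_, fun h ↦ ?_⟩
  · rintro rfl i j
    exact standardization_lt_iff hf
  · have hmono : StrictMono (f ∘ (σ⁻¹ : Equiv.Perm (Fin n))) :=
      fun i j hij ↦ by simpa [← h] using hij
    rw [standardization, ← inv_eq_iff_eq_inv, Tuple.eq_sort_iff]
    exact ⟨hmono.monotone, fun i j hij hf ↦ absurd hf (hmono hij).ne⟩

theorem standardization_perm (σ : Equiv.Perm (Fin n)) : standardization σ = σ := by
  simp [standardization]

theorem standardization_standardization_comp {m : ℕ} (hf : Function.Injective f)
    {ψ : Fin m → Fin n} (hψ : Function.Injective ψ) :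
    standardization (standardization f ∘ ψ) = standardization (f ∘ ψ) := by
  rw [eq_standardization_iff (hf.comp hψ)]
  intro i j
  rw [standardization_lt_iff ((standardization f).injective.comp hψ)]
  exact standardization_lt_iff hf

end Standardization

section Occurrences

variable {k m n : ℕ}

/-- The occurrences of the pattern `σ` in `π`, as order embeddings between the index sets. -/
def occurrences (σ : Equiv.Perm (Fin k)) (π : Equiv.Perm (Fin n)) : Finset (Fin k ↪o Fin n) :=
  {φ | standardization (π ∘ φ) = σ}

theorem mem_occurrences {σ : Equiv.Perm (Fin k)} {π : Equiv.Perm (Fin n)} {φ : Fin k ↪o Fin n} :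
    φ ∈ occurrences σ π ↔ standardization (π ∘ φ) = σ := by
  simp [occurrences]

theorem patternCount_eq_card_occurrences (σ : Equiv.Perm (Fin k)) (π : Equiv.Perm (Fin n)) :
    patternCount ⟨n, π⟩ ⟨k, σ⟩ = #(occurrences σ π) := by
  symm
  refine Finset.card_bij (fun φ _ ↦ φ) ?_ (fun _ _ _ _ h ↦ DFunLike.coe_injective h) ?_
  · intro φ hφ
    have hσ := (eq_standardization_iff (π.injective.comp φ.injective)).1 (mem_occurrences.1 hφ).symm
    simpa using hσ
  · intro φ hφ
    obtain ⟨hmono, hσ⟩ := (Finset.mem_filter.1 hφ).2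
    refine ⟨OrderEmbedding.ofStrictMono φ hmono, mem_occurrences.2 (Eq.symm ?_), rfl⟩
    rwa [eq_standardization_iff (π.injective.comp (OrderEmbedding.ofStrictMono φ hmono).injective)]

theorem card_occurrences_perm (σ π : Equiv.Perm (Fin n)) :
    #(occurrences σ π) = if σ = π then 1 else 0 := by
  have hrefl : π ∘ (default : Fin n ↪o Fin n) = π := rfl
  rw [occurrences, Finset.univ_unique, Finset.filter_singleton, hrefl, standardization_perm]
  simp only [eq_comm (a := π), apply_ite Finset.card, Finset.card_singleton, Finset.card_empty]

theorem trans_mem_occurrences_iff {σ : Equiv.Perm (Fin k)} {π : Equiv.Perm (Fin n)}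
    {ψ : Fin k ↪o Fin m} {χ : Fin m ↪o Fin n} :
    ψ.trans χ ∈ occurrences σ π ↔ ψ ∈ occurrences σ (standardization (π ∘ χ)) := by
  rw [mem_occurrences, mem_occurrences,
    standardization_standardization_comp (π.injective.comp χ.injective) ψ.injective]
  rfl

open scoped Classical in
theorem card_occurrences_standardization (σ : Equiv.Perm (Fin k)) (π : Equiv.Perm (Fin n))
    (χ : Fin m ↪o Fin n) :
    #(occurrences σ (standardization (π ∘ χ))) =
      #((occurrences σ π).filter fun φ : Fin k ↪o Fin n ↦ Set.range φ ⊆ Set.range χ) := by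
  refine Finset.card_bij (fun ψ _ ↦ ψ.trans χ) ?_ ?_ ?_
  · intro ψ hψ
    exact Finset.mem_filter.2
      ⟨trans_mem_occurrences_iff.2 hψ, exists_trans_eq_iff_range_subset.1 ⟨ψ, rfl⟩⟩
  · intro ψ _ ψ' _ h
    exact DFunLike.ext _ _ fun i ↦ χ.injective (DFunLike.congr_fun h i)
  · intro φ hφ
    obtain ⟨hσ, hφχ⟩ := Finset.mem_filter.1 hφ
    obtain ⟨ψ, rfl⟩ := exists_trans_eq_iff_range_subset.2 hφχ
    exact ⟨ψ, trans_mem_occurrences_iff.1 hσ, rfl⟩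

theorem sum_patternCount_mul_patternCount (σ : Equiv.Perm (Fin k)) (π : Equiv.Perm (Fin n))
    (hkm : k ≤ m) :
    ∑ τ : Equiv.Perm (Fin m), patternCount ⟨m, τ⟩ ⟨k, σ⟩ * patternCount ⟨n, π⟩ ⟨m, τ⟩ =
      (n - k).choose (m - k) * patternCount ⟨n, π⟩ ⟨k, σ⟩ := by
  classical
  simp only [patternCount_eq_card_occurrences]
  calc
    ∑ τ : Equiv.Perm (Fin m), #(occurrences σ τ) * #(occurrences τ π)
    _ = ∑ τ, ∑ χ ∈ occurrences τ π, #(occurrences σ (standardization (π ∘ χ))) := by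
      refine Finset.sum_congr rfl fun τ _ ↦ ?_
      rw [mul_comm, ← smul_eq_mul, ← Finset.sum_const]
      refine Finset.sum_congr rfl fun χ hχ ↦ ?_
      rw [mem_occurrences.1 hχ]
    _ = ∑ χ : Fin m ↪o Fin n, #(occurrences σ (standardization (π ∘ χ))) :=
      Finset.sum_fiberwise _ _ _
    _ = ∑ χ : Fin m ↪o Fin n,
          #((occurrences σ π).filter fun φ : Fin k ↪o Fin n ↦ Set.range φ ⊆ Set.range χ) :=
      Finset.sum_congr rfl fun χ _ ↦ card_occurrences_standardization σ π χ
    _ = ∑ φ ∈ occurrences σ π, #{χ : Fin m ↪o Fin n | Set.range φ ⊆ Set.range χ} :=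
      (Finset.sum_card_bipartiteAbove_eq_sum_card_bipartiteBelow _).symm
    _ = (n - k).choose (m - k) * #(occurrences σ π) := by
      rw [mul_comm, ← smul_eq_mul, ← Finset.sum_const]
      refine Finset.sum_congr rfl fun φ _ ↦ ?_
      have hcard := card_orderEmbedding_subset_range (m := m) (s := Finset.univ.map φ.toEmbedding)
      simpa [hkm] using hcard

end Occurrences

section ConvP

variable {σ π : Σ n, Equiv.Perm (Fin n)}

theorem patternCount_of_size_eq (h : π.1 = σ.1) : patternCount π σ = if σ = π then 1 else 0 := by
  obtain ⟨k, s⟩ := σ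
  obtain ⟨n, p⟩ := π
  obtain rfl : n = k := h
  simp [patternCount_eq_card_occurrences, card_occurrences_perm]

theorem convP_smul_right (F G : (Σ n, Equiv.Perm (Fin n)) → (Σ n, Equiv.Perm (Fin n)) → ℚ) (c : ℚ) :
    convP F (c • G) = c • convP F G := by
  ext σ π
  simp [convP, Finset.mul_sum, mul_left_comm]

/-- The element `P_ℓ` of `I(S)`: the component of degree `ℓ` of `PP`, where a pair `(σ, π)`
has degree `|π| - |σ|`. -/
def gradedPP (ℓ : ℕ) (σ π : Σ n, Equiv.Perm (Fin n)) : ℚ :=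
  if π.1 = σ.1 + ℓ then PP σ π else 0

theorem gradedPP_zero : gradedPP 0 = deltaP := by
  ext σ π
  by_cases h : π.1 = σ.1
  · simp [gradedPP, deltaP, PP, patternCount_of_size_eq h, h]
  · have hne : σ ≠ π := fun hσπ ↦ h (hσπ ▸ rfl)
    simp [gradedPP, deltaP, h, hne]

theorem gradedPP_one : gradedPP 1 = HP := rfl

theorem patternCount_pos_of_gradedPP_ne_zero {ℓ : ℕ} (h : gradedPP ℓ σ π ≠ 0) :
    0 < patternCount π σ := by
  contrapose! h
  simp [gradedPP, PP, Nat.le_zero.1 h]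

theorem convP_gradedPP_apply (a b : ℕ) (σ π : Σ n, Equiv.Perm (Fin n)) :
    convP (gradedPP a) (gradedPP b) σ π =
      ∑ τ : Equiv.Perm (Fin (σ.1 + a)), gradedPP a σ ⟨_, τ⟩ * gradedPP b ⟨_, τ⟩ π := by
  have hsupp : ∀ τ ∈ (Finset.range (π.1 + 1)).sigma fun _ ↦ Finset.univ,
      gradedPP a σ τ * gradedPP b τ π ≠ 0 → 0 < patternCount τ σ ∧ 0 < patternCount π τ :=
    fun τ _ h ↦ ⟨patternCount_pos_of_gradedPP_ne_zero (left_ne_zero_of_mul h),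
      patternCount_pos_of_gradedPP_ne_zero (right_ne_zero_of_mul h)⟩
  rw [convP, Finset.sum_filter_of_ne hsupp, Finset.sum_sigma]
  refine Finset.sum_eq_single (σ.1 + a) (fun m _ hm ↦ by simp [gradedPP, hm]) fun hm ↦ ?_
  have hlt : ¬ σ.1 + a ≤ π.1 := by simpa using hm
  refine Finset.sum_eq_zero fun τ _ ↦ mul_eq_zero_of_right _ ?_
  exact if_neg (by dsimp only; omega)

theorem convP_gradedPP (a b : ℕ) :
    convP (gradedPP a) (gradedPP b) = ((a + b).choose a : ℚ) • gradedPP (a + b) := by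
  ext σ π
  rw [convP_gradedPP_apply]
  by_cases h : π.1 = σ.1 + (a + b)
  · have hsum := sum_patternCount_mul_patternCount σ.2 π.2 (Nat.le_add_right σ.1 a)
    rw [show π.1 - σ.1 = a + b by omega, Nat.add_sub_cancel_left] at hsum
    simp only [Pi.smul_apply, smul_eq_mul, gradedPP, h, ← add_assoc, if_true, PP]
    exact_mod_cast hsum
  · simp [gradedPP, h, add_assoc]

theorem convPowP_HP (ℓ : ℕ) : convPowP HP ℓ = (ℓ.factorial : ℚ) • gradedPP ℓ := by
  induction ℓ with
  | zero => simp [convPowP, gradedPP_zero]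
  | succ ℓ ih =>
    rw [convPowP, ih, convP_smul_right, ← gradedPP_one, convP_gradedPP, smul_smul, add_comm 1 ℓ,
      Nat.choose_one_right, Nat.factorial_succ, Nat.cast_mul, mul_comm]

end ConvP

/-- For all permutations `σ ≤ π` and every `ℓ`, `H^ℓ(σ,π) = ℓ! · binom(π,σ)` if
`|π| = |σ| + ℓ`, and `0` otherwise. -/
theorem convPow_HP_apply (σ π : Σ n, Equiv.Perm (Fin n)) (h : 0 < patternCount π σ) (ℓ : ℕ) :
    convPowP HP ℓ σ π =
      if π.1 = σ.1 + ℓ then (Nat.factorial ℓ : ℚ) * patternCount π σ else 0 := by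
  simp [convPowP_HP, gradedPP, PP]
end
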